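/- (Existence, case (S₁) with starred condition) Suppose there exist ρ₁,ρ₂,r₁,r₂ ∈ (0,∞) with ρ₁/c₁ < r₁ and ρ₂/c₂ < r₂ such that condition (I⁰_{ρ₁,ρ₂})* holds and condition (I¹_{r₁,r₂}) holds. Then the system (*) has at least one nontrivial solution in K. -/

import Mathlib

open MeasureTheory Set

noncomputable def supNorm (w : ℝ → ℝ) : ℝ := ⨆ t : Set.Icc (0:ℝ) 1, |w t.1|

noncomputable def infOn (a b : ℝ) (w : ℝ → ℝ) : ℝ := ⨅ t : Set.Icc a b, w t.1

/-- Membership in the cone `K ⊆ C[0,1] × C[0,1]`. -/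
def inCone (a₁ b₁ c₁ a₂ b₂ c₂ : ℝ) (u v : ℝ → ℝ) : Prop :=
  ContinuousOn u (Set.Icc 0 1) ∧ ContinuousOn v (Set.Icc 0 1) ∧
    c₁ * supNorm u ≤ infOn a₁ b₁ u ∧ c₂ * supNorm v ≤ infOn a₂ b₂ v

/-- `(u, v)` solves the system of Hammerstein integral equations (*). -/
def isSolution (k₁ k₂ : ℝ → ℝ → ℝ) (f₁ f₂ : ℝ → ℝ → ℝ → ℝ) (u v : ℝ → ℝ) : Prop :=
  (∀ t ∈ Set.Icc (0:ℝ) 1, u t = ∫ s in (0:ℝ)..1, k₁ t s * f₁ s (u s) (v s)) ∧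
    (∀ t ∈ Set.Icc (0:ℝ) 1, v t = ∫ s in (0:ℝ)..1, k₂ t s * f₂ s (u s) (v s))

/-- `(u, v)` is a nontrivial solution of (*) lying in the cone. -/
def nontrivialSolution (k₁ k₂ : ℝ → ℝ → ℝ) (f₁ f₂ : ℝ → ℝ → ℝ → ℝ)
    (a₁ b₁ c₁ a₂ b₂ c₂ : ℝ) (u v : ℝ → ℝ) : Prop :=
  inCone a₁ b₁ c₁ a₂ b₂ c₂ u v ∧ isSolution k₁ k₂ f₁ f₂ u v ∧
    0 < max (supNorm u) (supNorm v)

/-- Condition `(I¹_{ρ₁,ρ₂})`. -/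
def condI1 (f₁ f₂ : ℝ → ℝ → ℝ → ℝ) (m₁ m₂ ρ₁ ρ₂ : ℝ) : Prop :=
  ∀ t ∈ Set.Icc (0:ℝ) 1, ∀ x ∈ Set.Icc (-ρ₁) ρ₁, ∀ y ∈ Set.Icc (-ρ₂) ρ₂,
    f₁ t x y < m₁ * ρ₁ ∧ f₂ t x y < m₂ * ρ₂

/-- Condition `(I⁰_{ρ₁,ρ₂})`. -/
def condI0 (f₁ f₂ : ℝ → ℝ → ℝ → ℝ) (a₁ b₁ c₁ a₂ b₂ c₂ M₁ M₂ ρ₁ ρ₂ : ℝ) : Prop :=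
  (∀ t ∈ Set.Icc a₁ b₁, ∀ x ∈ Set.Icc ρ₁ (ρ₁ / c₁), ∀ y ∈ Set.Icc (-(ρ₂ / c₂)) (ρ₂ / c₂),
      M₁ * ρ₁ < f₁ t x y) ∧
    (∀ t ∈ Set.Icc a₂ b₂, ∀ x ∈ Set.Icc (-(ρ₁ / c₁)) (ρ₁ / c₁), ∀ y ∈ Set.Icc ρ₂ (ρ₂ / c₂),
      M₂ * ρ₂ < f₂ t x y)

/-- Condition `(I⁰_{ρ₁,ρ₂})⋆`. -/
def condI0star (f₁ f₂ : ℝ → ℝ → ℝ → ℝ) (a₁ b₁ c₁ a₂ b₂ c₂ M₁ M₂ ρ₁ ρ₂ : ℝ) : Prop :=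
  (∀ t ∈ Set.Icc a₁ b₁, ∀ x ∈ Set.Icc 0 (ρ₁ / c₁), ∀ y ∈ Set.Icc (-(ρ₂ / c₂)) (ρ₂ / c₂),
      M₁ * ρ₁ < f₁ t x y) ∨
    (∀ t ∈ Set.Icc a₂ b₂, ∀ x ∈ Set.Icc (-(ρ₁ / c₁)) (ρ₁ / c₁), ∀ y ∈ Set.Icc 0 (ρ₂ / c₂),
      M₂ * ρ₂ < f₂ t x y)

/-! By `(I¹)` and the choice of `m₁, m₂`, the right-hand side of the system maps the box
`‖u‖_∞ ≤ r₁`, `‖v‖_∞ ≤ r₂` into itself. It is a compact integral operator after a superposition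
operator, so Schauder's theorem provides a solution, and the bounds `c Φ ≤ k` and `|k| ≤ Φ` put
every solution into the cone. The starred condition covers the origin, so that some `fᵢ(·, 0, 0)`
is positive on `[aᵢ, bᵢ]` and the solution cannot be zero.

Schauder's theorem is reduced to Brouwer's on the standard simplex by a partition of unity,
Brouwer's to the Knaster–Kuratowski–Mazurkiewicz covering theorem, and the latter to Scarf's
combinatorial lemma, a parity argument about points dominated in a family of linear orders. -/

section Scarf

open scoped Finset

section Pivoting

variable {V ι L : Type*} [LinearOrder L] {w : ι → V → L}

/-- Scarf's dominance condition for the orderings `w i` of `V`: no element lies strictly above the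
`w i`-minimum of `R` for every `i`. -/
def IsDominant (w : ι → V → L) (R : Finset V) : Prop :=
  ∀ y, ∃ i, ∀ x ∈ R, w i y ≤ w i x

/-- A family of slack elements: `s i` is `w i`-smallest, and every other slack element is
`w i`-larger than all elements that are not slack. They play the role of the faces at infinity of
a primitive set. -/
structure IsSlack (w : ι → V → L) (s : ι → V) : Prop where
  le : ∀ i y, w i (s i) ≤ w i y
  lt : ∀ {i k}, k ≠ i → ∀ {y}, y ∉ Set.range s → w i y < w i (s k)

/-- The elements strictly above `a i` in every ordering `w i` except `w j`. -/
def pivotSet (w : ι → V → L) (a : ι → V) (j : ι) : Set V :=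
  {x | ∀ i, i ≠ j → w i (a i) < w i x}

/-- The pivot rule: `x` is a `w j`-largest element of `pivotSet w a j`. -/
def IsPivot (w : ι → V → L) (a : ι → V) (j : ι) (x : V) : Prop :=
  x ∈ pivotSet w a j ∧ IsMaxOn (w j) (pivotSet w a j) x

/-- `a i` is a `w i`-smallest element of `D`, for every `i`. -/
def IsArgmin (w : ι → V → L) (D : Finset V) (a : ι → V) : Prop :=
  ∀ i, a i ∈ D ∧ ∀ x ∈ D, w i (a i) ≤ w i x

variable {a : ι → V} {s : ι → V} {j j₁ j₂ : ι} {x y : V} {D R : Finset V}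

theorem IsDominant.mono (hR : IsDominant w R) (h : D ⊆ R) : IsDominant w D :=
  fun y => (hR y).imp fun _ hi x hx => hi x (h hx)

theorem IsSlack.injective (hs : IsSlack w s) (hy : y ∉ Set.range s) : Function.Injective s := by
  intro i k hik
  by_contra hne
  exact (hs.lt (Ne.symm hne) hy).not_ge (hik ▸ hs.le i y)

theorem IsSlack.apply_lt (hs : IsSlack w s) (hw : ∀ i, Function.Injective (w i))
    (hy : y ∉ Set.range s) (i : ι) : w i (s i) < w i y :=
  (hs.le i y).lt_of_ne fun h => hy ⟨i, hw i h⟩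

theorem exists_isArgmin (w : ι → V → L) (hD : D.Nonempty) : ∃ a, IsArgmin w D a := by
  choose a ha using fun i => D.exists_min_image (w i) hD
  exact ⟨a, ha⟩

theorem exists_isPivot [Finite V] (h : (pivotSet w a j).Nonempty) : ∃ x, IsPivot w a j x :=
  (pivotSet w a j).exists_max_image (w j) (Set.toFinite _) h

theorem IsPivot.eq (hw : ∀ i, Function.Injective (w i)) (hx : IsPivot w a j x)
    (hy : IsPivot w a j y) : x = y :=
  hw j (le_antisymm (hy.2 hx.1) (hx.2 hy.1))

theorem IsDominant.exists_argmin_eq (hD : IsDominant w D) (hw : ∀ i, Function.Injective (w i))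
    (ha : IsArgmin w D a) (hx : x ∈ D) : ∃ i, a i = x := by
  obtain ⟨i, hi⟩ := hD x
  exact ⟨i, hw i (le_antisymm ((ha i).2 x hx) (hi _ (ha i).1))⟩

theorem IsArgmin.exists_ne_map_eq [Fintype ι] (ha : IsArgmin w D a)
    (hcard : #D + 1 = Fintype.card ι) : ∃ j₁ j₂, j₁ ≠ j₂ ∧ a j₁ = a j₂ := by
  obtain ⟨j₁, -, j₂, -, hne, h⟩ := Finset.exists_ne_map_eq_of_card_lt_of_maps_to
    (s := Finset.univ) (by rw [Finset.card_univ]; omega) fun i _ => (ha i).1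
  exact ⟨j₁, j₂, hne, h⟩

theorem IsDominant.eq_of_mem_pivotSet (hD : IsDominant w D) (ha : IsArgmin w D a)
    (h₁ : x ∈ pivotSet w a j₁) (h₂ : x ∈ pivotSet w a j₂) : j₁ = j₂ := by
  by_contra hne
  obtain ⟨i, hi⟩ := hD x
  by_cases hij : i = j₁
  · exact (hi _ (ha i).1).not_gt (h₂ i (hij ▸ hne))
  · exact (hi _ (ha i).1).not_gt (h₁ i hij)

theorem IsDominant.notMem_of_mem_pivotSet (hD : IsDominant w D)
    (hw : ∀ i, Function.Injective (w i)) (ha : IsArgmin w D a) (hne : j₁ ≠ j₂)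
    (hj : a j₁ = a j₂) (hx : x ∈ pivotSet w a j₁) : x ∉ D := by
  intro hxD
  obtain ⟨i, rfl⟩ := hD.exists_argmin_eq hw ha hxD
  by_cases hi : i = j₁
  · subst hi
    exact (hx j₂ hne.symm).ne (by rw [hj])
  · exact (hx i hi).false

theorem IsSlack.pivotSet_eq_empty (hs : IsSlack w s) {i₀ : ι} (hji : j ≠ i₀)
    (haj : a i₀ = s j) : pivotSet w a j = ∅ := by
  refine Set.eq_empty_of_forall_notMem fun x hx => ?_
  by_cases hxs : x ∈ Set.range s
  · obtain ⟨k, rfl⟩ := hxs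
    by_cases hkj : k = j
    · subst hkj
      exact (hx i₀ hji.symm).ne (by rw [haj])
    · exact (hx k hkj).not_ge (hs.le k (a k))
  · exact (hx i₀ hji.symm).not_gt (haj ▸ hs.lt hji hxs)

open Classical in
/-- Scarf's primitive sets, pictured as the rooms of a house: the dominant sets with as many
elements as there are orderings. -/
noncomputable def rooms [Fintype V] [Fintype ι] (w : ι → V → L) : Finset (Finset V) :=
  {R | #R = Fintype.card ι ∧ IsDominant w R}

open Classical in
/-- The doors for the colour `i₀`: the dominant sets one element smaller than a room that carry
every colour except `i₀` exactly once. -/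
noncomputable def doors [Fintype V] [Fintype ι] [DecidableEq ι] (w : ι → V → L) (c : V → ι)
    (i₀ : ι) : Finset (Finset V) :=
  {D | #D + 1 = Fintype.card ι ∧ IsDominant w D ∧ D.image c = Finset.univ.erase i₀}

theorem mem_rooms [Fintype V] [Fintype ι] : R ∈ rooms w ↔ #R = Fintype.card ι ∧ IsDominant w R := by
  simp [rooms]

theorem mem_doors [Fintype V] [Fintype ι] [DecidableEq ι] {c : V → ι} {i₀ : ι} :
    D ∈ doors w c i₀ ↔
      #D + 1 = Fintype.card ι ∧ IsDominant w D ∧ D.image c = Finset.univ.erase i₀ := by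
  simp [doors]

variable [DecidableEq V]

theorem IsDominant.insert_of_isPivot (hD : IsDominant w D) (ha : IsArgmin w D a)
    (hx : IsPivot w a j x) : IsDominant w (insert x D) := by
  intro y
  by_cases hy : y ∈ pivotSet w a j
  · refine ⟨j, (Finset.forall_mem_insert ..).2 ⟨hx.2 hy, fun z hz => (hx.2 hy).trans ?_⟩⟩
    obtain ⟨i, hi⟩ := hD x
    obtain rfl : i = j := by
      by_contra hij
      exact (hi _ (ha i).1).not_gt (hx.1 i hij)
    exact hi z hz
  · simp only [pivotSet, Set.mem_ofPred_eq, not_forall, not_lt] at hy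
    obtain ⟨i, hij, hi⟩ := hy
    exact ⟨i, (Finset.forall_mem_insert ..).2
      ⟨hi.trans (hx.1 i hij).le, fun z hz => hi.trans ((ha i).2 z hz)⟩⟩

theorem IsArgmin.exists_isPivot_of_insert [Fintype ι] (ha : IsArgmin w D a)
    (hw : ∀ i, Function.Injective (w i)) (hcard : #D + 1 = Fintype.card ι) (hxD : x ∉ D)
    (hdom : IsDominant w (insert x D)) :
    ∃ j, IsPivot w a j x ∧ Set.InjOn a {i | i ≠ j} := by
  classical
  obtain ⟨j, hjx⟩ := hdom x
  have exists_index : ∀ z ∈ D, ∃ i, i ≠ j ∧ a i = z ∧ w i z ≤ w i x := by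
    intro z hz
    obtain ⟨i, hi⟩ := hdom z
    refine ⟨i, ?_, hw i (le_antisymm ((ha i).2 z hz) (hi _ (Finset.mem_insert_of_mem (ha i).1))),
      hi x (Finset.mem_insert_self x D)⟩
    rintro rfl
    have hxz : x = z := hw i (le_antisymm (hjx z (Finset.mem_insert_of_mem hz))
      (hi x (Finset.mem_insert_self x D)))
    exact hxD (hxz ▸ hz)
  have hinj : Set.InjOn a {i | i ≠ j} := by
    have : Set.InjOn a (Finset.univ.erase j) := Finset.injOn_of_surjOn_of_card_le a (t := D)
      (fun i _ => (ha i).1)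
      (fun z hz => by
        obtain ⟨i, hij, hi, -⟩ := exists_index z hz
        exact ⟨i, by simpa using hij, hi⟩)
      (by rw [Finset.card_erase_of_mem (Finset.mem_univ j), Finset.card_univ]; omega)
    simpa [Set.InjOn] using this
  refine ⟨j, ⟨fun i hij => ?_, fun y hy => ?_⟩, hinj⟩
  · obtain ⟨i', hi'j, hai, hle⟩ := exists_index (a i) (ha i).1
    obtain rfl := hinj hi'j hij hai
    exact hle.lt_of_ne fun h => hxD (hw i' h ▸ (ha i').1)
  · obtain ⟨i, hi⟩ := hdom y
    obtain rfl : i = j := by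
      by_contra hij
      exact (hi _ (Finset.mem_insert_of_mem (ha i).1)).not_gt (hy i hij)
    exact hi x (Finset.mem_insert_self x D)

theorem IsSlack.isDominant_image_erase [Fintype ι] [DecidableEq ι] (hs : IsSlack w s)
    (i₀ : ι) : IsDominant w ((Finset.univ.erase i₀).image s) := by
  intro y
  by_cases hy : y ∈ Set.range s
  · obtain ⟨k, rfl⟩ := hy
    exact ⟨k, fun x _ => hs.le k x⟩
  · exact ⟨i₀, Finset.forall_mem_image.2 fun k hk => (hs.lt (Finset.ne_of_mem_erase hk) hy).le⟩

theorem IsSlack.card_image_erase [Fintype ι] [DecidableEq ι] (hs : IsSlack w s)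
    (hy : y ∉ Set.range s) (i₀ : ι) : #((Finset.univ.erase i₀).image s) + 1 = Fintype.card ι := by
  rw [Finset.card_image_of_injective _ (hs.injective hy),
    Finset.card_erase_add_one (Finset.mem_univ i₀), Finset.card_univ]

theorem image_erase_eq_of_apply_eq [DecidableEq ι] {c : V → ι} (hy : y ∈ R) (hyx : y ≠ x)
    (hc : c y = c x) : (R.erase x).image c = R.image c := by
  refine (Finset.image_subset_image (Finset.erase_subset x R)).antisymm
    (Finset.image_subset_iff.2 fun z hz => ?_)
  by_cases hzx : z = x
  · exact Finset.mem_image.2 ⟨y, Finset.mem_erase.2 ⟨hyx, hy⟩, by rw [hc, hzx]⟩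
  · exact Finset.mem_image_of_mem c (Finset.mem_erase.2 ⟨hzx, hz⟩)

theorem filter_image_erase_eq_pair [DecidableEq ι] {c : V → ι} (hxR : x ∈ R) (hyR : y ∈ R)
    (hyx : y ≠ x) (hc : c y = c x) (hinj : Set.InjOn c (R.erase x)) :
    {z ∈ R | (R.erase z).image c = R.image c} = {x, y} := by
  ext z
  rw [Finset.mem_filter, Finset.mem_insert, Finset.mem_singleton]
  constructor
  · rintro ⟨hzR, hz⟩
    by_contra! hcon
    have hzx : z ∈ R.erase x := Finset.mem_erase.2 ⟨hcon.1, hzR⟩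
    obtain ⟨z', hz', hcz⟩ := Finset.mem_image.1 (hz ▸ Finset.mem_image_of_mem c hzR)
    obtain ⟨hz'ne, hz'R⟩ := Finset.mem_erase.1 hz'
    by_cases hz'x : z' = x
    · exact hcon.2 (hinj hzx (Finset.mem_erase.2 ⟨hyx, hyR⟩) (by rw [← hcz, hz'x, hc]))
    · exact hz'ne (hinj (Finset.mem_erase.2 ⟨hz'x, hz'R⟩) hzx hcz)
  · rintro (rfl | rfl)
    · exact ⟨hxR, image_erase_eq_of_apply_eq hyR hyx hc⟩
    · exact ⟨hyR, image_erase_eq_of_apply_eq hxR hyx.symm hc.symm⟩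

theorem even_card_filter_image_erase [Fintype ι] [DecidableEq ι] (c : V → ι) (i₀ : ι)
    (hcard : #R = Fintype.card ι) (hR : R.image c ≠ Finset.univ) :
    Even #{x ∈ R | (R.erase x).image c = Finset.univ.erase i₀} := by
  rcases {x ∈ R | (R.erase x).image c = Finset.univ.erase i₀}.eq_empty_or_nonempty with hS | ⟨x, hx⟩
  · rw [hS, Finset.card_empty]
    exact Even.zero
  obtain ⟨hxR, hx⟩ := Finset.mem_filter.1 hx
  have hinj : Set.InjOn c (R.erase x) := by
    rw [← Finset.card_image_iff, hx, Finset.card_erase_of_mem (Finset.mem_univ i₀),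
      Finset.card_erase_of_mem hxR, hcard, Finset.card_univ]
  have hcx : c x ∈ (R.erase x).image c := by
    rw [hx, Finset.mem_erase]
    refine ⟨fun h => hR ?_, Finset.mem_univ _⟩
    rw [← Finset.insert_erase hxR, Finset.image_insert, hx, h,
      Finset.insert_erase (Finset.mem_univ i₀)]
  obtain ⟨x', hx', hcx'⟩ := Finset.mem_image.1 hcx
  obtain ⟨hne, hx'R⟩ := Finset.mem_erase.1 hx'
  rw [← hx, image_erase_eq_of_apply_eq hx'R hne hcx',
    filter_image_erase_eq_pair hxR hx'R hne hcx' hinj, Finset.card_pair hne.symm]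
  exact even_two

theorem eq_image_of_subset_range [DecidableEq ι] {c : V → ι} {S : Finset ι}
    (hc : ∀ i, c (s i) = i) (hD : ∀ x ∈ D, x ∈ Set.range s) (hDc : D.image c = S) :
    D = S.image s := by
  rw [← hDc, Finset.image_image]
  refine (Finset.image_id.symm).trans (Finset.image_congr fun x hx => ?_)
  obtain ⟨i, rfl⟩ := hD x hx
  exact congrArg s (hc i).symm

variable [Fintype V]

open Classical in
/-- The elements that complete the dominant set `D` to a dominant set with one more element. -/
noncomputable def completions (w : ι → V → L) (D : Finset V) : Finset V :=
  {x | x ∉ D ∧ IsDominant w (insert x D)}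

theorem mem_completions : x ∈ completions w D ↔ x ∉ D ∧ IsDominant w (insert x D) := by
  simp [completions]

variable [Fintype ι]

theorem IsDominant.mem_completions_iff (hD : IsDominant w D) (ha : IsArgmin w D a)
    (hw : ∀ i, Function.Injective (w i)) (hcard : #D + 1 = Fintype.card ι) (hne : j₁ ≠ j₂)
    (hj : a j₁ = a j₂) : x ∈ completions w D ↔ IsPivot w a j₁ x ∨ IsPivot w a j₂ x := by
  rw [mem_completions]
  constructor
  · rintro ⟨hxD, hdom⟩
    obtain ⟨j, hx, hinj⟩ := ha.exists_isPivot_of_insert hw hcard hxD hdom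
    by_contra! hcon
    exact hne (hinj (fun h : j₁ = j => hcon.1 (h ▸ hx)) (fun h : j₂ = j => hcon.2 (h ▸ hx)) hj)
  · rintro (hx | hx)
    · exact ⟨hD.notMem_of_mem_pivotSet hw ha hne hj hx.1, hD.insert_of_isPivot ha hx⟩
    · exact ⟨hD.notMem_of_mem_pivotSet hw ha hne.symm hj.symm hx.1, hD.insert_of_isPivot ha hx⟩

theorem IsDominant.card_completions_of_notMem_range (hD : IsDominant w D) (hs : IsSlack w s)
    (hw : ∀ i, Function.Injective (w i)) (hcard : #D + 1 = Fintype.card ι) (hyD : y ∈ D)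
    (hy : y ∉ Set.range s) : #(completions w D) = 2 := by
  obtain ⟨a, ha⟩ := exists_isArgmin w ⟨y, hyD⟩
  obtain ⟨j₁, j₂, hne, hj⟩ := ha.exists_ne_map_eq hcard
  have hpivot (j) : ∃ x, IsPivot w a j x :=
    exists_isPivot ⟨s j, fun i hij => ((ha i).2 y hyD).trans_lt (hs.lt hij.symm hy)⟩
  obtain ⟨x₁, hx₁⟩ := hpivot j₁
  obtain ⟨x₂, hx₂⟩ := hpivot j₂
  rw [Finset.card_eq_two]
  refine ⟨x₁, x₂, ?_, ?_⟩
  · rintro rfl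
    exact hne (hD.eq_of_mem_pivotSet ha hx₁.1 hx₂.1)
  · ext x
    rw [hD.mem_completions_iff ha hw hcard hne hj, Finset.mem_insert, Finset.mem_singleton]
    exact or_congr ⟨fun hx => hx.eq hw hx₁, fun h => h ▸ hx₁⟩
      ⟨fun hx => hx.eq hw hx₂, fun h => h ▸ hx₂⟩

theorem card_rooms_filter_subset (w : ι → V → L) (hcard : #D + 1 = Fintype.card ι) :
    #{R ∈ rooms w | D ⊆ R} = #(completions w D) := by
  have himage : {R ∈ rooms w | D ⊆ R} = (completions w D).image (insert · D) := by
    ext R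
    simp only [Finset.mem_filter, mem_rooms, Finset.mem_image, mem_completions]
    constructor
    · rintro ⟨⟨hRcard, hR⟩, hDR⟩
      obtain ⟨x, hx, rfl⟩ := Finset.exists_eq_insert_iff.2 ⟨hDR, hcard.trans hRcard.symm⟩
      exact ⟨x, ⟨hx, hR⟩, rfl⟩
    · rintro ⟨x, ⟨hx, hR⟩, rfl⟩
      exact ⟨⟨(Finset.card_insert_of_notMem hx).trans hcard, hR⟩, Finset.subset_insert x D⟩
  rw [himage, Finset.card_image_of_injOn]
  exact (Finset.insert_inj_on D).mono fun x hx => (mem_completions.1 hx).1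

variable [DecidableEq ι]

theorem IsSlack.card_completions_image_erase [Nontrivial ι] (hs : IsSlack w s)
    (hw : ∀ i, Function.Injective (w i)) (hy : y ∉ Set.range s) (i₀ : ι) :
    #(completions w ((Finset.univ.erase i₀).image s)) = 1 := by
  have hD := hs.isDominant_image_erase i₀
  have hcard := hs.card_image_erase hy i₀
  have hsD (i) (hi : i ≠ i₀) : s i ∈ (Finset.univ.erase i₀).image s :=
    Finset.mem_image_of_mem s (Finset.mem_erase.2 ⟨hi, Finset.mem_univ i⟩)
  obtain ⟨k, hk⟩ := exists_ne i₀
  obtain ⟨a, ha⟩ := exists_isArgmin w (D := (Finset.univ.erase i₀).image s)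
    ⟨s k, hsD k hk⟩
  have has (i) (hi : i ≠ i₀) : a i = s i :=
    hw i (le_antisymm ((ha i).2 _ (hsD i hi)) (hs.le i _))
  obtain ⟨j, hj, haj⟩ := Finset.mem_image.1 (ha i₀).1
  have hji : j ≠ i₀ := Finset.ne_of_mem_erase hj
  obtain ⟨x, hx⟩ : ∃ x, IsPivot w a i₀ x :=
    exists_isPivot ⟨y, fun i hi => has i hi ▸ hs.apply_lt hw hy i⟩
  rw [Finset.card_eq_one]
  refine ⟨x, ?_⟩
  ext z
  rw [hD.mem_completions_iff ha hw hcard hji.symm (by rw [has j hji, haj]), Finset.mem_singleton]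
  have hz : ¬ IsPivot w a j z := fun hz => by
    simpa [hs.pivotSet_eq_empty hji haj.symm] using hz.1
  exact ⟨fun h => (h.resolve_right hz).eq hw hx, fun h => Or.inl (h ▸ hx)⟩

theorem card_doors_filter_subset (c : V → ι) (i₀ : ι) (hR : R ∈ rooms w) :
    #{D ∈ doors w c i₀ | D ⊆ R} = #{x ∈ R | (R.erase x).image c = Finset.univ.erase i₀} := by
  obtain ⟨hRcard, hRdom⟩ := mem_rooms.1 hR
  have himage : {D ∈ doors w c i₀ | D ⊆ R} =
      {x ∈ R | (R.erase x).image c = Finset.univ.erase i₀}.image R.erase := by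
    ext D
    simp only [Finset.mem_filter, mem_doors, Finset.mem_image]
    constructor
    · rintro ⟨⟨hcard, -, hc⟩, hDR⟩
      obtain ⟨x, hx, rfl⟩ := Finset.exists_eq_insert_iff.2 ⟨hDR, hcard.trans hRcard.symm⟩
      exact ⟨x, ⟨Finset.mem_insert_self x D, by rwa [Finset.erase_insert hx]⟩,
        Finset.erase_insert hx⟩
    · rintro ⟨x, ⟨hx, hc⟩, rfl⟩
      exact ⟨⟨(Finset.card_erase_add_one hx).trans hRcard, hRdom.mono (Finset.erase_subset x R),
        hc⟩, Finset.erase_subset x R⟩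
  rw [himage, Finset.card_image_of_injOn]
  exact (Finset.erase_injOn R).mono (Finset.coe_subset.2 (Finset.filter_subset _ R))

theorem IsSlack.image_erase_mem_doors {c : V → ι} (hs : IsSlack w s) (hc : ∀ i, c (s i) = i)
    (hy : y ∉ Set.range s) (i₀ : ι) : (Finset.univ.erase i₀).image s ∈ doors w c i₀ := by
  refine mem_doors.2 ⟨hs.card_image_erase hy i₀, hs.isDominant_image_erase i₀, ?_⟩
  rw [Finset.image_image, show c ∘ s = id from funext hc, Finset.image_id]

end Pivoting

variable {V ι L : Type*} [LinearOrder L] {w : ι → V → L} {s : ι → V} {y : V}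

theorem exists_isDominant_image_eq_univ [Finite V] [Fintype ι] [DecidableEq ι] [Nontrivial ι]
    {c : V → ι} (hw : ∀ i, Function.Injective (w i)) (hs : IsSlack w s) (hc : ∀ i, c (s i) = i)
    (hy : y ∉ Set.range s) : ∃ R, IsDominant w R ∧ R.image c = Finset.univ := by
  classical
  cases nonempty_fintype V
  obtain ⟨i₀⟩ := (inferInstance : Nonempty ι)
  by_contra! hcon
  have hD₀ := hs.image_erase_mem_doors hc hy i₀
  have hdouble : ∑ D ∈ doors w c i₀, #(completions w D) =
      ∑ R ∈ rooms w, #{x ∈ R | (R.erase x).image c = Finset.univ.erase i₀} := by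
    rw [← Finset.sum_congr rfl fun D hD => card_rooms_filter_subset w (mem_doors.1 hD).1,
      ← Finset.sum_congr rfl fun R hR => card_doors_filter_subset c i₀ hR]
    exact Finset.sum_card_bipartiteAbove_eq_sum_card_bipartiteBelow
      (fun D R : Finset V => D ⊆ R)
  have hrooms : Even (∑ R ∈ rooms w, #{x ∈ R | (R.erase x).image c = Finset.univ.erase i₀}) :=
    Finset.even_sum _ fun R hR =>
      even_card_filter_image_erase c i₀ (mem_rooms.1 hR).1 (hcon R (mem_rooms.1 hR).2)
  have hdoors : Even (∑ D ∈ (doors w c i₀).erase ((Finset.univ.erase i₀).image s),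
      #(completions w D)) := by
    refine Finset.even_sum _ fun D hD => ?_
    obtain ⟨hne, hD⟩ := Finset.mem_erase.1 hD
    obtain ⟨hcard, hDdom, hDc⟩ := mem_doors.1 hD
    obtain ⟨z, hzD, hz⟩ : ∃ z ∈ D, z ∉ Set.range s := by
      by_contra! hDs
      exact hne (eq_image_of_subset_range hc hDs hDc)
    exact hDdom.card_completions_of_notMem_range hs hw hcard hzD hz ▸ even_two
  rw [← hdouble, ← Finset.add_sum_erase _ _ hD₀, hs.card_completions_image_erase hw hy i₀,
    Nat.even_add] at hrooms
  exact Nat.not_even_one (hrooms.2 hdoors)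

end Scarf

section Labelling

variable {T ι α : Type*}

/-- The orderings of `T` given by `p`, extended to slack elements `Sum.inr i` that lie at `-∞` in
the `i`-th ordering and at `+∞` in the others; ties are broken by `e`. -/
def slackOrder [DecidableEq ι] {n : ℕ} (p : ι → T → α) (e : T ⊕ ι → Fin n) (i : ι) (v : T ⊕ ι) :
    WithBot (WithTop α) ×ₗ Fin n :=
  toLex (v.elim (fun t => ((p i t : WithTop α) : WithBot (WithTop α)))
    (fun k => if k = i then ⊥ else ((⊤ : WithTop α) : WithBot (WithTop α))), e v)

variable [DecidableEq ι] {n : ℕ} {p : ι → T → α} {e : T ⊕ ι → Fin n}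

theorem slackOrder_injective (he : Function.Injective e) (i : ι) :
    Function.Injective (slackOrder p e i) :=
  fun _ _ h => he (congrArg (fun q => (ofLex q).2) h)

variable [LinearOrder α]

theorem slackOrder_inl_le_inl {i : ι} {t t' : T}
    (h : slackOrder p e i (.inl t) ≤ slackOrder p e i (.inl t')) : p i t ≤ p i t' := by
  have := Prod.Lex.monotone_fst _ _ h
  simpa [slackOrder] using this

theorem isSlack_slackOrder : IsSlack (slackOrder p e) Sum.inr where
  le i y := by
    obtain rfl | hy := eq_or_ne y (.inr i)
    · rfl
    · refine (Prod.Lex.toLex_lt_toLex.2 (Or.inl ?_)).le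
      rcases y with t | k
      · simp [bot_lt_iff_ne_bot]
      · simp [bot_lt_iff_ne_bot, ne_of_apply_ne Sum.inr hy]
  lt {i k} hk {y} hy := by
    rcases y with t | j
    · exact Prod.Lex.toLex_lt_toLex.2 (Or.inl (by
        simpa only [Sum.elim_inl, Sum.elim_inr, if_neg hk] using
          WithBot.coe_lt_coe.2 (WithTop.coe_lt_top (p i t))))
    · exact (hy ⟨j, rfl⟩).elim

theorem exists_finset_forall_exists_image_forall_le [Finite T] [Finite ι] [Nontrivial ι]
    (p : ι → T → α) (c : T → ι) :
    ∃ σ : Finset T, ∀ y, ∃ i ∈ σ.image c, ∀ t ∈ σ, p i y ≤ p i t := by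
  cases nonempty_fintype ι
  rcases isEmpty_or_nonempty T with hT | ⟨⟨t₀⟩⟩
  · exact ⟨∅, isEmptyElim⟩
  obtain ⟨n, ⟨e⟩⟩ := Finite.exists_equiv_fin (T ⊕ ι)
  have hs : IsSlack (slackOrder p e) Sum.inr := isSlack_slackOrder
  obtain ⟨R, hR, hRc⟩ := exists_isDominant_image_eq_univ (c := Sum.elim c id)
    (slackOrder_injective e.injective) hs (fun _ => rfl) (y := .inl t₀) (by simp)
  refine ⟨R.toLeft, fun y => ?_⟩
  obtain ⟨i, hi⟩ := hR (.inl y)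
  refine ⟨i, ?_, fun t ht => slackOrder_inl_le_inl (hi _ (Finset.mem_toLeft.1 ht))⟩
  obtain ⟨v, hv, hvi⟩ := Finset.mem_image.1 (hRc ▸ Finset.mem_univ i)
  rcases v with t | k
  · exact Finset.mem_image.2 ⟨t, Finset.mem_toLeft.2 hv, hvi⟩
  · obtain rfl : k = i := hvi
    exact ((hi _ hv).not_gt (hs.apply_lt (slackOrder_injective e.injective) (by simp) k)).elim

end Labelling

section Simplex

open Filter Topology

variable {ι : Type*} [Fintype ι]

theorem one_sub_card_mul_le_sum [Nonempty ι] {S : Set (ι → ℝ)} {ε : ℝ} (hε : 0 ≤ ε)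
    (hS : stdSimplex ℝ ι ⊆ ⋃ x ∈ S, Metric.ball x ε) {z : ι → ℝ} (hz : 0 ≤ z)
    (hSz : ∀ x ∈ S, ∃ i, x i ≤ z i) : 1 - Fintype.card ι * ε ≤ ∑ i, z i := by
  by_contra! hlt
  have hcard : (0 : ℝ) < Fintype.card ι := by positivity
  set d : ℝ := (1 - ∑ i, z i) / Fintype.card ι with hd
  have hεd : ε < d := by rw [hd, lt_div_iff₀ hcard]; linarith
  have hy : (fun i => z i + d) ∈ stdSimplex ℝ ι := by
    refine ⟨fun i => add_nonneg (hz i) (hε.trans hεd.le), ?_⟩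
    rw [Finset.sum_add_distrib, Finset.sum_const, nsmul_eq_mul, Finset.card_univ, hd,
      mul_div_cancel₀ _ hcard.ne', add_sub_cancel]
  obtain ⟨x, hx, hxy⟩ := mem_iUnion₂.1 (hS hy)
  obtain ⟨i, hi⟩ := hSz x hx
  have hdist : |z i + d - x i| < ε := (dist_le_pi_dist (fun i => z i + d) x i).trans_lt hxy
  linarith [le_abs_self (z i + d - x i)]

theorem le_add_of_mem_stdSimplex_of_le {x z : ι → ℝ} {η : ℝ} (hx : x ∈ stdSimplex ℝ ι)
    (hzx : z ≤ x) (hz : 1 - η ≤ ∑ i, z i) (i : ι) : x i ≤ z i + η := by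
  have : x i - z i ≤ ∑ i, (x i - z i) :=
    Finset.single_le_sum (fun i _ => sub_nonneg.2 (hzx i)) (Finset.mem_univ i)
  rw [Finset.sum_sub_distrib, hx.2] at this
  linarith

variable {A : ι → Set (ι → ℝ)}

theorem exists_mem_stdSimplex_forall_le_or_dist_le [Nontrivial ι]
    (hcover : stdSimplex ℝ ι ⊆ ⋃ i, A i) {η : ℝ} (hη : 0 < η) :
    ∃ x ∈ stdSimplex ℝ ι, ∀ i, x i ≤ η ∨ ∃ x' ∈ A i, dist x' x ≤ η := by
  classical
  obtain ⟨S, hSΔ, hSfin, hS⟩ :=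
    (isCompact_stdSimplex ℝ ι).finite_cover_balls (e := η / Fintype.card ι) (by positivity)
  have := hSfin.to_subtype
  choose c hc using fun t : S => mem_iUnion.1 (hcover (hSΔ t.2))
  obtain ⟨σ, hσ⟩ := exists_finset_forall_exists_image_forall_le (fun i (t : S) => t.1 i) c
  have hσne : σ.Nonempty := by
    obtain ⟨x, hx, -⟩ := mem_iUnion₂.1 (hS (single_mem_stdSimplex ℝ (Classical.arbitrary ι)))
    obtain ⟨i, hi, -⟩ := hσ ⟨x, hx⟩
    exact Finset.image_nonempty.1 ⟨i, hi⟩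
  let z : ι → ℝ := fun i => if i ∈ σ.image c then σ.inf' hσne (fun t => t.1 i) else 0
  have hz : 0 ≤ z := fun i => by
    dsimp only [z]
    split_ifs
    exacts [Finset.le_inf' _ _ fun t _ => (hSΔ t.2).1 i, le_rfl]
  have hzle (t) (ht : t ∈ σ) (i) : z i ≤ t.1 i := by
    dsimp only [z]
    split_ifs
    exacts [Finset.inf'_le (fun t : S => t.1 i) ht, (hSΔ t.2).1 i]
  have hsum : 1 - η ≤ ∑ i, z i := by
    refine (one_sub_card_mul_le_sum (by positivity) hS hz fun x hx => ?_).trans_eq' (by field_simp)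
    obtain ⟨i, hi, hle⟩ := hσ ⟨x, hx⟩
    exact ⟨i, by simpa only [z, if_pos hi] using Finset.le_inf' hσne _ hle⟩
  have hlez (t) (ht : t ∈ σ) (i) : t.1 i ≤ z i + η :=
    le_add_of_mem_stdSimplex_of_le (hSΔ t.2) (hzle t ht) hsum i
  obtain ⟨x, hx⟩ := hσne
  refine ⟨x, hSΔ x.2, fun i => ?_⟩
  by_cases hi : i ∈ σ.image c
  · obtain ⟨t, ht, rfl⟩ := Finset.mem_image.1 hi
    refine Or.inr ⟨t, hc t, (dist_pi_le_iff hη.le).2 fun i => ?_⟩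
    rw [Real.dist_eq, abs_le]
    constructor <;> linarith [hzle t ht i, hlez t ht i, hzle x hx i, hlez x hx i]
  · exact Or.inl (by simpa only [z, if_neg hi, zero_add] using hlez x hx i)

theorem exists_mem_stdSimplex_forall_mem [Nontrivial ι] (hA : ∀ i, IsClosed (A i))
    (hcover : stdSimplex ℝ ι ⊆ ⋃ i, A i) (hface : ∀ i, {x ∈ stdSimplex ℝ ι | x i = 0} ⊆ A i) :
    ∃ x ∈ stdSimplex ℝ ι, ∀ i, x ∈ A i := by
  have hη (n : ℕ) : (0 : ℝ) < 1 / (n + 1) := by positivity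
  choose x hxΔ hx using fun n => exists_mem_stdSimplex_forall_le_or_dist_le hcover (hη n)
  obtain ⟨y, hyΔ, φ, hφ, hlim⟩ := (isCompact_stdSimplex ℝ ι).tendsto_subseq hxΔ
  have hηlim : Tendsto (fun n => (1 : ℝ) / (φ n + 1)) atTop (𝓝 0) :=
    tendsto_one_div_add_atTop_nhds_zero_nat.comp hφ.tendsto_atTop
  refine ⟨y, hyΔ, fun i => ?_⟩
  by_contra hy
  have hyi : 0 < y i := (hyΔ.1 i).lt_of_ne' fun h => hy (hface i ⟨hyΔ, h⟩)
  obtain ⟨δ, hδ, hball⟩ := Metric.isOpen_iff.1 (hA i).isOpen_compl y hy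
  have hlarge : ∀ᶠ n in atTop, 1 / ((φ n : ℝ) + 1) < x (φ n) i :=
    hηlim.eventually_lt ((continuous_apply i).continuousAt.tendsto.comp hlim) hyi
  obtain ⟨n, hlarge, hnear, hsmall⟩ := (hlarge.and ((hlim.eventually
    (Metric.ball_mem_nhds y (half_pos hδ))).and (hηlim.eventually_lt_const (half_pos hδ)))).exists
  obtain hle | ⟨x', hx', hdist⟩ := hx (φ n) i
  · exact hle.not_gt hlarge
  · refine hball (Metric.mem_ball.2 ?_) hx'
    exact (dist_triangle x' (x (φ n)) y).trans_lt
      ((add_lt_add (hdist.trans_lt hsmall) hnear).trans_eq (add_halves δ))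

theorem exists_fixedPoint_of_mapsTo_stdSimplex [Nonempty ι] {f : (ι → ℝ) → ι → ℝ}
    (hf : ContinuousOn f (stdSimplex ℝ ι)) (hmaps : MapsTo f (stdSimplex ℝ ι) (stdSimplex ℝ ι)) :
    ∃ x ∈ stdSimplex ℝ ι, f x = x := by
  rcases subsingleton_or_nontrivial ι with hι | hι
  · rw [stdSimplex_unique] at hmaps ⊢
    exact ⟨_, rfl, hmaps rfl⟩
  let A : ι → Set (ι → ℝ) := fun i => {x ∈ stdSimplex ℝ ι | x i ≤ f x i}
  have hsum {x} (hx : x ∈ stdSimplex ℝ ι) : ∑ i, x i = ∑ i, f x i := hx.2.trans (hmaps hx).2.symm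
  obtain ⟨x, hx, hxA⟩ := exists_mem_stdSimplex_forall_mem (A := A)
    (fun i => (isClosed_stdSimplex ℝ ι).isClosed_le (continuous_apply i).continuousOn
      ((continuous_apply i).comp_continuousOn hf))
    (fun x hx => by
      by_contra! hcon
      have hlt (i) : f x i < x i := not_le.1 fun h => hcon (mem_iUnion.2 ⟨i, hx, h⟩)
      exact (Finset.sum_lt_sum_of_nonempty Finset.univ_nonempty fun i _ => hlt i).ne (hsum hx).symm)
    (fun i x hx => ⟨hx.1, hx.2.trans_le ((hmaps hx.1).1 i)⟩)
  have heq := (Finset.sum_eq_sum_iff_of_le fun i _ => (hxA i).2).1 (hsum hx)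
  exact ⟨x, hx, funext fun i => (heq i (Finset.mem_univ i)).symm⟩

end Simplex

section Schauder

open Filter Topology

theorem exists_eq_sum_smul_of_mapsTo_stdSimplex {E ι : Type*} [AddCommGroup E] [Module ℝ E]
    [TopologicalSpace E] [ContinuousAdd E] [ContinuousSMul ℝ E] [Fintype ι] [Nonempty ι]
    {s : Set E} (hs : Convex ℝ s) {p : ι → E} (hp : ∀ i, p i ∈ s) {w : E → ι → ℝ}
    (hw : ContinuousOn w s) (hmaps : MapsTo w s (stdSimplex ℝ ι)) :
    ∃ x ∈ s, x = ∑ i, w x i • p i := by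
  have hg : MapsTo (fun y : ι → ℝ => ∑ i, y i • p i) (stdSimplex ℝ ι) s := fun y hy =>
    hs.sum_mem (fun i _ => hy.1 i) hy.2 fun i _ => hp i
  obtain ⟨y, hy, hfix⟩ := exists_fixedPoint_of_mapsTo_stdSimplex
    (hw.comp (by fun_prop : Continuous _).continuousOn hg) (hmaps.comp hg)
  exact ⟨_, hg hy, congrArg (fun y : ι → ℝ => ∑ i, y i • p i) hfix.symm⟩

variable {E : Type*} [NormedAddCommGroup E] [NormedSpace ℝ E] {s K : Set E} {T : E → E}

theorem exists_dist_map_lt_of_mapsTo_isCompact (hs : Convex ℝ s) (hne : s.Nonempty)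
    (hT : ContinuousOn T s) (hK : IsCompact K) (hKs : K ⊆ s) (hmaps : MapsTo T s K) {ε : ℝ}
    (hε : 0 < ε) : ∃ x ∈ s, dist x (T x) < ε := by
  obtain ⟨t, htK, htfin, hcover⟩ := hK.finite_cover_balls hε
  rw [biUnion_eq_iUnion] at hcover
  have := htfin.fintype
  have : Nonempty t := (mem_iUnion.1 (hcover (hmaps hne.some_mem))).nonempty
  obtain ⟨f, hf⟩ := PartitionOfUnity.exists_isSubordinate hK.isClosed
    (fun i : t => Metric.ball i.1 ε) (fun _ => Metric.isOpen_ball) hcover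
  have hsum {y} (hy : y ∈ K) : ∑ i, f i y = 1 := by
    rw [← finsum_eq_sum_of_fintype, f.sum_eq_one hy]
  obtain ⟨x, hx, hxsum⟩ := exists_eq_sum_smul_of_mapsTo_stdSimplex hs
    (fun i : t => hKs (htK i.2)) (w := fun x i => f i (T x))
    (continuousOn_pi.2 fun i => (f i).continuous.comp_continuousOn hT)
    fun x hx => ⟨fun i => f.nonneg i _, hsum (hmaps hx)⟩
  refine ⟨x, hx, ?_⟩
  have hball := f.finsum_smul_mem_convex (g := fun i _ => i.1) (hmaps hx)
    (fun i hi => Metric.mem_ball'.1 (hf i (subset_tsupport _ hi))) (convex_ball (T x) ε)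
  rwa [finsum_eq_sum_of_fintype, ← hxsum] at hball

theorem exists_fixedPoint_of_mapsTo_isCompact (hs : Convex ℝ s) (hne : s.Nonempty)
    (hT : ContinuousOn T s) (hK : IsCompact K) (hKs : K ⊆ s) (hmaps : MapsTo T s K) :
    ∃ x ∈ s, T x = x := by
  choose x hxs hx using fun n : ℕ => exists_dist_map_lt_of_mapsTo_isCompact hs hne hT hK hKs hmaps
    (Nat.one_div_pos_of_nat (α := ℝ) (n := n))
  obtain ⟨y, hyK, φ, hφ, hTx⟩ := hK.tendsto_subseq fun n => hmaps (hxs n)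
  have hdist : Tendsto (fun n => dist (T (x (φ n))) (x (φ n))) atTop (𝓝 0) :=
    squeeze_zero (fun _ => dist_nonneg) (fun n => (dist_comm _ _).trans_le (hx _).le)
      (tendsto_one_div_add_atTop_nhds_zero_nat.comp hφ.tendsto_atTop)
  have hxy : Tendsto (x ∘ φ) atTop (𝓝 y) := hTx.congr_dist hdist
  exact ⟨y, hKs hyK, tendsto_nhds_unique ((hT y (hKs hyK)).tendsto.comp
    (tendsto_nhdsWithin_iff.2 ⟨hxy, Eventually.of_forall fun n => hxs (φ n)⟩)) hTx⟩

end Schauder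

section CompactOperator

variable {E F X Y : Type*} [NormedAddCommGroup E] [NormedSpace ℝ E] [NormedAddCommGroup F]
  [NormedSpace ℝ F] [TopologicalSpace X] [CompactSpace X]

theorem exists_fixedPoint_of_isCompactOperator_comp {A : F →L[ℝ] E} (hA : IsCompactOperator A)
    {N : E → F} {s : Set E} (hs : Convex ℝ s) (hsc : IsClosed s) (hne : s.Nonempty)
    (hN : ContinuousOn N s) (hb : Bornology.IsBounded (N '' s)) (hmaps : MapsTo (A ∘ N) s s) :
    ∃ x ∈ s, A (N x) = x :=
  exists_fixedPoint_of_mapsTo_isCompact (T := A ∘ N) (K := closure (A '' (N '' s))) hs hne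
    (A.continuous.comp_continuousOn hN) (hA.isCompact_closure_image_of_bounded hb)
    (closure_minimal (by rw [← image_comp]; exact hmaps.image_subset) hsc)
    fun _ hx => subset_closure (mem_image_of_mem _ (mem_image_of_mem _ hx))

/-- The operator `g ↦ (t ↦ Λ t g)` attached to a continuous family `Λ` of functionals. -/
noncomputable def dualFamilyOperator (Λ : C(X, F →L[ℝ] ℝ)) : F →L[ℝ] C(X, ℝ) :=
  LinearMap.mkContinuous
    { toFun g := ⟨fun t => Λ t g, by fun_prop⟩
      map_add' g h := ContinuousMap.ext fun t => map_add (Λ t) g h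
      map_smul' a g := ContinuousMap.ext fun t => map_smul (Λ t) a g }
    ‖Λ‖ fun g => (ContinuousMap.norm_le _ (by positivity)).2 fun t =>
      (Λ t).le_of_opNorm_le (Λ.norm_coe_le_norm t) g

theorem isCompactOperator_dualFamilyOperator (Λ : C(X, F →L[ℝ] ℝ)) :
    IsCompactOperator (dualFamilyOperator Λ) := by
  let e := ContinuousMap.isometryEquivBoundedOfCompact X ℝ
  let S := e '' (dualFamilyOperator Λ '' Metric.closedBall 0 1)
  have hcompact : IsCompact (closure S) := by
    refine BoundedContinuousFunction.arzela_ascoli (Metric.closedBall 0 ‖Λ‖)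
      (isCompact_closedBall 0 _) S ?_ fun t => ?_
    · rintro _ t ⟨_, ⟨g, hg, rfl⟩, rfl⟩
      exact mem_closedBall_zero_iff.2 <| (Λ t).le_of_opNorm_le_of_le (Λ.norm_coe_le_norm t)
        (mem_closedBall_zero_iff.1 hg) |>.trans_eq (mul_one _)
    · have hlim : Filter.Tendsto (fun t' => ‖Λ t - Λ t'‖) (nhds t) (nhds 0) :=
        Continuous.tendsto' (by fun_prop) _ _ (by rw [sub_self, norm_zero])
      refine Metric.equicontinuousAt_of_continuity_modulus _ hlim _ (.of_forall fun t' => ?_)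
      rintro ⟨_, _, ⟨g, hg, rfl⟩, rfl⟩
      exact (Λ t - Λ t').le_of_opNorm_le_of_le le_rfl (mem_closedBall_zero_iff.1 hg)
        |>.trans_eq (mul_one _)
  refine (isCompactOperator_iff_image_closedBall_subset_compact
    (dualFamilyOperator Λ).toLinearMap one_pos).2
    ⟨_, hcompact.image e.symm.continuous, fun h hh => ?_⟩
  exact ⟨e h, subset_closure (mem_image_of_mem e hh), e.symm_apply_apply h⟩

variable [TopologicalSpace Y] [CompactSpace Y] [MeasurableSpace Y] [BorelSpace Y]
  (μ : Measure Y) [IsFiniteMeasure μ]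

/-- Integration against a finite measure, as a functional on continuous functions. -/
noncomputable def integralFunctional : C(Y, ℝ) →L[ℝ] ℝ :=
  L1.integralCLM.comp (ContinuousMap.toLp 1 μ ℝ)

theorem integralFunctional_apply (g : C(Y, ℝ)) : integralFunctional μ g = ∫ s, g s ∂μ :=
  (L1.integral_eq _).symm.trans <| (L1.integral_eq_integral _).trans <|
    integral_congr_ae (ContinuousMap.coeFn_toLp μ g)

/-- The integral operator `g ↦ ∫ κ(·, s) g(s) dμ(s)` with continuous kernel `κ`, given as the
continuous map `t ↦ κ(t, ·)`. -/
noncomputable def integralOperator (κ : C(X, C(Y, ℝ))) : C(Y, ℝ) →L[ℝ] C(X, ℝ) :=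
  dualFamilyOperator ⟨fun t => (integralFunctional μ).comp (ContinuousLinearMap.mul ℝ _ (κ t)),
    by fun_prop⟩

variable (κ : C(X, C(Y, ℝ)))

theorem isCompactOperator_integralOperator : IsCompactOperator (integralOperator μ κ) :=
  isCompactOperator_dualFamilyOperator _

theorem integralOperator_apply (g : C(Y, ℝ)) (t : X) :
    integralOperator μ κ g t = ∫ s, κ t s * g s ∂μ :=
  integralFunctional_apply μ (κ t * g)

variable {μ κ}

theorem norm_integralOperator_le [Nonempty X] {C B : ℝ} (hκ : ∀ t, ∫ s, |κ t s| ∂μ ≤ C)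
    {g : C(Y, ℝ)} (hg : ‖g‖ ≤ B) : ‖integralOperator μ κ g‖ ≤ C * B := by
  refine (ContinuousMap.norm_le_of_nonempty _).2 fun t => ?_
  have hint : Integrable (κ t) μ :=
    (κ t).continuous.integrable_of_hasCompactSupport (.of_compactSpace _)
  calc ‖integralOperator μ κ g t‖ = ‖∫ s, κ t s * g s ∂μ‖ := by rw [integralOperator_apply]
    _ ≤ ∫ s, |κ t s| * B ∂μ := by
      refine norm_integral_le_of_norm_le (hint.abs.mul_const B) (.of_forall fun s => ?_)
      rw [norm_mul, Real.norm_eq_abs]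
      exact mul_le_mul_of_nonneg_left ((g.norm_coe_le_norm s).trans hg) (abs_nonneg _)
    _ = (∫ s, |κ t s| ∂μ) * B := integral_mul_const _ _
    _ ≤ C * B := mul_le_mul_of_nonneg_right (hκ t) ((norm_nonneg g).trans hg)

end CompactOperator

section Hammerstein

theorem isCompactOperator_prodMap {E E' F F' : Type*} [TopologicalSpace E] [Zero E]
    [TopologicalSpace E'] [Zero E'] [TopologicalSpace F] [TopologicalSpace F'] {f : E → F}
    {f' : E' → F'} (hf : IsCompactOperator f) (hf' : IsCompactOperator f') :
    IsCompactOperator (Prod.map f f') := by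
  obtain ⟨K, hK, hU⟩ := hf
  obtain ⟨K', hK', hU'⟩ := hf'
  exact ⟨K ×ˢ K', hK.prod hK', prod_mem_nhds hU hU'⟩

variable {X Z W : Type*} [TopologicalSpace X] [TopologicalSpace Z] [TopologicalSpace W]

/-- The superposition operator `w ↦ F(·, w(·))`. -/
def nemytskiiOperator (F : C(X × Z, W)) (w : C(X, Z)) : C(X, W) :=
  F.comp ((ContinuousMap.id X).prodMk w)

theorem continuous_nemytskiiOperator [LocallyCompactPair X Z] (F : C(X × Z, W)) :
    Continuous (nemytskiiOperator F) :=
  ContinuousMap.continuous_of_continuous_uncurry _ <| F.continuous.comp <| continuous_snd.prodMk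
    (by fun_prop : Continuous fun p : C(X, Z) × X => p.1 p.2)

variable [CompactSpace X] [MeasurableSpace X] [BorelSpace X] {μ : Measure X} [IsFiniteMeasure μ]

theorem exists_hammerstein_solution [Nonempty X] {κ₁ κ₂ : C(X, C(X, ℝ))} {F₁ F₂ : C(X × ℝ × ℝ, ℝ)}
    {C₁ C₂ B₁ B₂ r₁ r₂ : ℝ} (hκ₁ : ∀ t, ∫ s, |κ₁ t s| ∂μ ≤ C₁) (hκ₂ : ∀ t, ∫ s, |κ₂ t s| ∂μ ≤ C₂)
    (hF₁ : ∀ s, ∀ x ∈ Icc (-r₁) r₁, ∀ y ∈ Icc (-r₂) r₂, |F₁ (s, x, y)| ≤ B₁)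
    (hF₂ : ∀ s, ∀ x ∈ Icc (-r₁) r₁, ∀ y ∈ Icc (-r₂) r₂, |F₂ (s, x, y)| ≤ B₂)
    (hr₁ : 0 ≤ r₁) (hr₂ : 0 ≤ r₂) (hCB₁ : C₁ * B₁ ≤ r₁) (hCB₂ : C₂ * B₂ ≤ r₂) :
    ∃ u v : C(X, ℝ), (∀ t, u t = ∫ s, κ₁ t s * F₁ (s, u s, v s) ∂μ) ∧
      ∀ t, v t = ∫ s, κ₂ t s * F₂ (s, u s, v s) ∂μ := by
  let A := (integralOperator μ κ₁).prodMap (integralOperator μ κ₂)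
  let N : C(X, ℝ) × C(X, ℝ) → C(X, ℝ) × C(X, ℝ) := fun w =>
    (nemytskiiOperator F₁ (w.1.prodMk w.2), nemytskiiOperator F₂ (w.1.prodMk w.2))
  let D : Set (C(X, ℝ) × C(X, ℝ)) := Metric.closedBall 0 r₁ ×ˢ Metric.closedBall 0 r₂
  have hmem {w} (hw : w ∈ D) (s : X) : w.1 s ∈ Icc (-r₁) r₁ ∧ w.2 s ∈ Icc (-r₂) r₂ :=
    ⟨abs_le.1 ((w.1.norm_coe_le_norm s).trans (mem_closedBall_zero_iff.1 hw.1)),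
      abs_le.1 ((w.2.norm_coe_le_norm s).trans (mem_closedBall_zero_iff.1 hw.2))⟩
  have hN {w} (hw : w ∈ D) : ‖(N w).1‖ ≤ B₁ ∧ ‖(N w).2‖ ≤ B₂ :=
    ⟨(ContinuousMap.norm_le_of_nonempty _).2 fun s => hF₁ s _ (hmem hw s).1 _ (hmem hw s).2,
      (ContinuousMap.norm_le_of_nonempty _).2 fun s => hF₂ s _ (hmem hw s).1 _ (hmem hw s).2⟩
  have hNcont : Continuous N :=
    ((continuous_nemytskiiOperator F₁).prodMk (continuous_nemytskiiOperator F₂)).comp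
      (ContinuousMap.continuous_of_continuous_uncurry _
        (by fun_prop : Continuous fun p : (C(X, ℝ) × C(X, ℝ)) × X => (p.1.1 p.2, p.1.2 p.2)))
  have hNbdd : Bornology.IsBounded (N '' D) :=
    (Metric.isBounded_closedBall.prod Metric.isBounded_closedBall).subset <|
      image_subset_iff.2 fun w hw =>
        ⟨mem_closedBall_zero_iff.2 (hN hw).1, mem_closedBall_zero_iff.2 (hN hw).2⟩
  obtain ⟨w, -, hw⟩ := exists_fixedPoint_of_isCompactOperator_comp (A := A) (N := N) (s := D)
    (isCompactOperator_prodMap (isCompactOperator_integralOperator μ κ₁)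
      (isCompactOperator_integralOperator μ κ₂))
    ((convex_closedBall 0 r₁).prod (convex_closedBall 0 r₂))
    (Metric.isClosed_closedBall.prod Metric.isClosed_closedBall)
    ⟨0, by simp [D, hr₁, hr₂]⟩ hNcont.continuousOn hNbdd fun w hw =>
      ⟨mem_closedBall_zero_iff.2 ((norm_integralOperator_le hκ₁ (hN hw).1).trans hCB₁),
        mem_closedBall_zero_iff.2 ((norm_integralOperator_le hκ₂ (hN hw).2).trans hCB₂)⟩
  refine ⟨w.1, w.2, fun t => ?_, fun t => ?_⟩
  · conv_lhs => rw [← congrArg Prod.fst hw]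
    exact integralOperator_apply μ κ₁ _ t
  · conv_lhs => rw [← congrArg Prod.snd hw]
    exact integralOperator_apply μ κ₂ _ t

end Hammerstein

section UnitInterval

theorem intervalIntegral_zero_one_eq_integral_subtype (g : ℝ → ℝ) :
    ∫ s in (0 : ℝ)..1, g s = ∫ s : Icc (0 : ℝ) 1, g s := by
  rw [intervalIntegral.integral_of_le zero_le_one, ← integral_Icc_eq_integral_Ioc,
    ← integral_subtype_comap measurableSet_Icc]
  rfl

variable {k : ℝ → ℝ → ℝ} {f : ℝ → ℝ → ℝ → ℝ}

/-- A kernel continuous on the unit square, in the curried form `t ↦ k(t, ·)`. -/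
def curriedKernel (hk : ContinuousOn (fun p : ℝ × ℝ => k p.1 p.2) (Icc 0 1 ×ˢ Icc 0 1)) :
    C(Icc (0 : ℝ) 1, C(Icc (0 : ℝ) 1, ℝ)) :=
  ContinuousMap.curry ⟨fun p => k p.1 p.2, hk.comp_continuous
    (f := fun p : Icc (0 : ℝ) 1 × Icc (0 : ℝ) 1 => ((p.1 : ℝ), (p.2 : ℝ))) (by fun_prop)
    fun p => ⟨p.1.2, p.2.2⟩⟩

/-- A nonlinearity continuous for `t` in the unit interval, as a bundled continuous map. -/
def restrictedNonlinearity (hf : ContinuousOn (fun p : ℝ × ℝ × ℝ => f p.1 p.2.1 p.2.2)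
    (Icc 0 1 ×ˢ (univ : Set (ℝ × ℝ)))) : C(Icc (0 : ℝ) 1 × ℝ × ℝ, ℝ) :=
  ⟨fun p => f p.1 p.2.1 p.2.2, hf.comp_continuous
    (f := fun p : Icc (0 : ℝ) 1 × ℝ × ℝ => ((p.1 : ℝ), p.2)) (by fun_prop)
    fun p => ⟨p.1.2, mem_univ _⟩⟩

theorem bddAbove_range_integral_abs
    (hk : ContinuousOn (fun p : ℝ × ℝ => k p.1 p.2) (Icc 0 1 ×ˢ Icc 0 1)) :
    BddAbove (range fun t : Icc (0 : ℝ) 1 => ∫ s in (0 : ℝ)..1, |k t s|) := by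
  obtain ⟨C, hC⟩ := (isCompact_Icc.prod isCompact_Icc).exists_bound_of_continuousOn hk
  refine ⟨C, forall_mem_range.2 fun t => (Real.le_norm_self _).trans ?_⟩
  refine (intervalIntegral.norm_integral_le_of_norm_le_const fun s hs => ?_).trans_eq
    (by rw [sub_zero, abs_one, mul_one])
  rw [uIoc_of_le zero_le_one] at hs
  simpa only [norm_abs_eq_norm] using hC (t, s) ⟨t.2, Ioc_subset_Icc_self hs⟩

variable {k₁ k₂ : ℝ → ℝ → ℝ} {f₁ f₂ : ℝ → ℝ → ℝ → ℝ} {m₁ m₂ r₁ r₂ : ℝ}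

theorem exists_isSolution_of_condI1
    (hk₁ : ContinuousOn (fun p : ℝ × ℝ => k₁ p.1 p.2) (Icc 0 1 ×ˢ Icc 0 1))
    (hk₂ : ContinuousOn (fun p : ℝ × ℝ => k₂ p.1 p.2) (Icc 0 1 ×ˢ Icc 0 1))
    (hf₁ : ContinuousOn (fun p : ℝ × ℝ × ℝ => f₁ p.1 p.2.1 p.2.2)
      (Icc 0 1 ×ˢ (univ : Set (ℝ × ℝ))))
    (hf₂ : ContinuousOn (fun p : ℝ × ℝ × ℝ => f₂ p.1 p.2.1 p.2.2)
      (Icc 0 1 ×ˢ (univ : Set (ℝ × ℝ))))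
    (hf₁nn : ∀ t ∈ Icc (0 : ℝ) 1, ∀ x y, 0 ≤ f₁ t x y)
    (hf₂nn : ∀ t ∈ Icc (0 : ℝ) 1, ∀ x y, 0 ≤ f₂ t x y)
    (hm₁pos : 0 < m₁) (hm₂pos : 0 < m₂)
    (hm₁ : 1 / m₁ = ⨆ t : Icc (0 : ℝ) 1, ∫ s in (0 : ℝ)..1, |k₁ t s|)
    (hm₂ : 1 / m₂ = ⨆ t : Icc (0 : ℝ) 1, ∫ s in (0 : ℝ)..1, |k₂ t s|)
    (hr₁ : 0 ≤ r₁) (hr₂ : 0 ≤ r₂) (hI1 : condI1 f₁ f₂ m₁ m₂ r₁ r₂) :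
    ∃ u v : ℝ → ℝ, Continuous u ∧ Continuous v ∧ isSolution k₁ k₂ f₁ f₂ u v := by
  have hle {k : ℝ → ℝ → ℝ} (hk : ContinuousOn (fun p : ℝ × ℝ => k p.1 p.2) (Icc 0 1 ×ˢ Icc 0 1))
      (t : Icc (0 : ℝ) 1) :
      ∫ s, |curriedKernel hk t s| ≤ ⨆ t : Icc (0 : ℝ) 1, ∫ s in (0 : ℝ)..1, |k t s| :=
    (intervalIntegral_zero_one_eq_integral_subtype _).ge.trans
      (le_ciSup (bddAbove_range_integral_abs hk) t)
  obtain ⟨u, v, hu, hv⟩ := exists_hammerstein_solution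
    (κ₁ := curriedKernel hk₁) (κ₂ := curriedKernel hk₂) (F₁ := restrictedNonlinearity hf₁)
    (F₂ := restrictedNonlinearity hf₂) (C₁ := 1 / m₁) (C₂ := 1 / m₂) (B₁ := m₁ * r₁)
    (B₂ := m₂ * r₂) (fun t => hm₁ ▸ hle hk₁ t) (fun t => hm₂ ▸ hle hk₂ t)
    (fun s x hx y hy => (abs_of_nonneg (hf₁nn s s.2 x y)).trans_le (hI1 s s.2 x hx y hy).1.le)
    (fun s x hx y hy => (abs_of_nonneg (hf₂nn s s.2 x y)).trans_le (hI1 s s.2 x hx y hy).2.le)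
    hr₁ hr₂ (by field_simp; rfl) (by field_simp; rfl)
  refine ⟨IccExtend zero_le_one u, IccExtend zero_le_one v, u.continuous.Icc_extend',
    v.continuous.Icc_extend', fun t ht => ?_, fun t ht => ?_⟩
  · rw [IccExtend_of_mem _ _ ht, hu, intervalIntegral_zero_one_eq_integral_subtype]
    simp only [IccExtend_val]
    rfl
  · rw [IccExtend_of_mem _ _ ht, hv, intervalIntegral_zero_one_eq_integral_subtype]
    simp only [IccExtend_val]
    rfl

end UnitInterval

section SupNorm

variable {w : ℝ → ℝ}

theorem abs_le_supNorm (hw : ContinuousOn w (Icc 0 1)) {t : ℝ} (ht : t ∈ Icc (0 : ℝ) 1) :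
    |w t| ≤ supNorm w := by
  have hbdd : BddAbove (range fun t : Icc (0 : ℝ) 1 => |w t|) :=
    (isCompact_range hw.domRestrict.abs).bddAbove
  exact le_ciSup hbdd ⟨t, ht⟩

theorem mul_supNorm_le_infOn_of_le {a b c J : ℝ} (hab : a ≤ b) (hc : 0 ≤ c)
    (hle : ∀ t ∈ Icc (0 : ℝ) 1, |w t| ≤ J) (hge : ∀ t ∈ Icc a b, c * J ≤ w t) :
    c * supNorm w ≤ infOn a b w := by
  have : Nonempty (Icc a b) := ⟨⟨a, left_mem_Icc.2 hab⟩⟩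
  have hsup : supNorm w ≤ J := ciSup_le fun t => hle t t.2
  exact (mul_le_mul_of_nonneg_left hsup hc).trans (le_ciInf fun t => hge t t.2)

end SupNorm

/-- A continuous kernel on the unit square whose sections `k t` are dominated by the weight `Φ`,
and dominate `c * Φ` for `t ∈ [a, b]`: the integral operator with such a kernel sends nonnegative
functions into the cone of those `w` with `c * ‖w‖_∞ ≤ w` on `[a, b]`. -/
structure IsConeKernel (k : ℝ → ℝ → ℝ) (Φ : ℝ → ℝ) (a b c : ℝ) : Prop where
  continuousOn : ContinuousOn (fun p : ℝ × ℝ => k p.1 p.2) (Icc 0 1 ×ˢ Icc 0 1)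
  zero_le_left : 0 ≤ a
  left_le_right : a ≤ b
  right_le_one : b ≤ 1
  const_pos : 0 < c
  integrableOn_weight : IntegrableOn Φ (Icc 0 1)
  integral_weight_pos : 0 < ∫ s in a..b, Φ s
  abs_le_weight : ∀ t ∈ Icc (0 : ℝ) 1, ∀ᵐ s ∂volume.restrict (Icc (0 : ℝ) 1), |k t s| ≤ Φ s
  const_mul_weight_le :
    ∀ t ∈ Icc a b, ∀ᵐ s ∂volume.restrict (Icc (0 : ℝ) 1), c * Φ s ≤ k t s

namespace IsConeKernel

variable {k : ℝ → ℝ → ℝ} {Φ : ℝ → ℝ} {a b c t : ℝ} (hK : IsConeKernel k Φ a b c)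
include hK

theorem Icc_subset : Icc a b ⊆ Icc 0 1 :=
  Icc_subset_Icc hK.zero_le_left hK.right_le_one

theorem weight_nonneg : ∀ᵐ s ∂volume.restrict (Icc (0 : ℝ) 1), 0 ≤ Φ s :=
  (hK.abs_le_weight 0 unitInterval.zero_mem).mono fun _ hs => (abs_nonneg _).trans hs

variable {h : ℝ → ℝ} (hh : ContinuousOn h (Icc 0 1))
include hh

theorem intervalIntegrable_weight_mul :
    IntervalIntegrable (fun s => Φ s * h s) volume 0 1 :=
  (intervalIntegrable_iff_integrableOn_Icc_of_le zero_le_one).2 <|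
    hK.integrableOn_weight.mul_continuousOn hh isCompact_Icc

theorem intervalIntegrable_mul (ht : t ∈ Icc (0 : ℝ) 1) :
    IntervalIntegrable (fun s => k t s * h s) volume 0 1 := by
  have hkt : ContinuousOn (k t) (Icc 0 1) :=
    hK.continuousOn.comp (f := fun s => (t, s)) (by fun_prop) fun s hs => ⟨ht, hs⟩
  exact (hkt.mul hh).intervalIntegrable_of_Icc zero_le_one

variable (hnn : ∀ s ∈ Icc (0 : ℝ) 1, 0 ≤ h s)
include hnn

theorem abs_integral_mul_le (ht : t ∈ Icc (0 : ℝ) 1) :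
    |∫ s in (0 : ℝ)..1, k t s * h s| ≤ ∫ s in (0 : ℝ)..1, Φ s * h s := by
  rw [← Real.norm_eq_abs]
  refine intervalIntegral.norm_integral_le_of_norm_le zero_le_one ?_
    (hK.intervalIntegrable_weight_mul hh)
  filter_upwards [(ae_restrict_iff' measurableSet_Icc).1 (hK.abs_le_weight t ht)] with s hs hs'
  rw [Real.norm_eq_abs, abs_mul, abs_of_nonneg (hnn s (Ioc_subset_Icc_self hs'))]
  exact mul_le_mul_of_nonneg_right (hs (Ioc_subset_Icc_self hs'))
    (hnn s (Ioc_subset_Icc_self hs'))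

theorem const_mul_integral_weight_mul_le (ht : t ∈ Icc a b) :
    c * ∫ s in (0 : ℝ)..1, Φ s * h s ≤ ∫ s in (0 : ℝ)..1, k t s * h s := by
  rw [← intervalIntegral.integral_const_mul]
  refine intervalIntegral.integral_mono_ae_restrict zero_le_one
    ((hK.intervalIntegrable_weight_mul hh).const_mul c)
    (hK.intervalIntegrable_mul hh (hK.Icc_subset ht)) ?_
  filter_upwards [hK.const_mul_weight_le t ht, ae_restrict_mem measurableSet_Icc] with s hs hs'
  rw [← mul_assoc]
  exact mul_le_mul_of_nonneg_right hs (hnn s hs')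

theorem integral_weight_mul_pos (hpos : ∀ s ∈ Icc a b, 0 < h s) :
    0 < ∫ s in (0 : ℝ)..1, Φ s * h s := by
  obtain ⟨s₀, hs₀, hmin⟩ := isCompact_Icc.exists_isMinOn (nonempty_Icc.2 hK.left_le_right)
    (hh.mono hK.Icc_subset)
  have hsub : uIcc a b ⊆ uIcc 0 1 := by
    rw [uIcc_of_le hK.left_le_right, uIcc_of_le zero_le_one]
    exact hK.Icc_subset
  have hΦ : IntervalIntegrable Φ volume a b :=
    ((intervalIntegrable_iff_integrableOn_Icc_of_le zero_le_one).2
      hK.integrableOn_weight).mono_set hsub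
  calc 0 < (∫ s in a..b, Φ s) * h s₀ := mul_pos hK.integral_weight_pos (hpos s₀ hs₀)
    _ = ∫ s in a..b, Φ s * h s₀ := (intervalIntegral.integral_mul_const _ _).symm
    _ ≤ ∫ s in a..b, Φ s * h s := by
      refine intervalIntegral.integral_mono_ae_restrict hK.left_le_right (hΦ.mul_const _)
        ((hK.intervalIntegrable_weight_mul hh).mono_set hsub) ?_
      filter_upwards [ae_restrict_of_ae_restrict_of_subset hK.Icc_subset hK.weight_nonneg,
        ae_restrict_mem measurableSet_Icc] with s hs hs'
      exact mul_le_mul_of_nonneg_left (hmin hs') hs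
    _ ≤ ∫ s in (0 : ℝ)..1, Φ s * h s := by
      refine intervalIntegral.integral_mono_interval hK.zero_le_left hK.left_le_right
        hK.right_le_one ?_ (hK.intervalIntegrable_weight_mul hh)
      filter_upwards [ae_restrict_of_ae_restrict_of_subset Ioc_subset_Icc_self hK.weight_nonneg,
        ae_restrict_mem measurableSet_Ioc] with s hs hs'
      exact mul_nonneg hs (hnn s (Ioc_subset_Icc_self hs'))

variable {w : ℝ → ℝ} (hw : ∀ t ∈ Icc (0 : ℝ) 1, w t = ∫ s in (0 : ℝ)..1, k t s * h s)
include hw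

theorem mul_supNorm_le_infOn : c * supNorm w ≤ infOn a b w :=
  mul_supNorm_le_infOn_of_le hK.left_le_right hK.const_pos.le
    (fun t ht => hw t ht ▸ hK.abs_integral_mul_le hh hnn ht)
    fun t ht => hw t (hK.Icc_subset ht) ▸ hK.const_mul_integral_weight_mul_le hh hnn ht

theorem pos_of_forall_pos (hpos : ∀ s ∈ Icc a b, 0 < h s) (ht : t ∈ Icc a b) : 0 < w t := by
  rw [hw t (hK.Icc_subset ht)]
  exact (mul_pos hK.const_pos (hK.integral_weight_mul_pos hh hnn hpos)).trans_le
    (hK.const_mul_integral_weight_mul_le hh hnn ht)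

end IsConeKernel

section Existence

variable {k₁ k₂ : ℝ → ℝ → ℝ} {f₁ f₂ : ℝ → ℝ → ℝ → ℝ} {Φ₁ Φ₂ : ℝ → ℝ}
  {a₁ b₁ c₁ a₂ b₂ c₂ m₁ m₂ M₁ M₂ ρ₁ ρ₂ r₁ r₂ : ℝ} {u v : ℝ → ℝ}

theorem continuousOn_superposition {f : ℝ → ℝ → ℝ → ℝ}
    (hf : ContinuousOn (fun p : ℝ × ℝ × ℝ => f p.1 p.2.1 p.2.2) (Icc 0 1 ×ˢ (univ : Set (ℝ × ℝ))))
    (hu : ContinuousOn u (Icc 0 1)) (hv : ContinuousOn v (Icc 0 1)) :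
    ContinuousOn (fun s => f s (u s) (v s)) (Icc 0 1) :=
  hf.comp (f := fun s => (s, u s, v s)) (by fun_prop) fun _ hs => ⟨hs, mem_univ _⟩

theorem nontrivialSolution_of_isSolution
    (hK₁ : IsConeKernel k₁ Φ₁ a₁ b₁ c₁) (hK₂ : IsConeKernel k₂ Φ₂ a₂ b₂ c₂)
    (hf₁ : ContinuousOn (fun p : ℝ × ℝ × ℝ => f₁ p.1 p.2.1 p.2.2)
      (Icc 0 1 ×ˢ (univ : Set (ℝ × ℝ))))
    (hf₂ : ContinuousOn (fun p : ℝ × ℝ × ℝ => f₂ p.1 p.2.1 p.2.2)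
      (Icc 0 1 ×ˢ (univ : Set (ℝ × ℝ))))
    (hf₁nn : ∀ t ∈ Icc (0 : ℝ) 1, ∀ x y, 0 ≤ f₁ t x y)
    (hf₂nn : ∀ t ∈ Icc (0 : ℝ) 1, ∀ x y, 0 ≤ f₂ t x y)
    (hpos : (∀ t ∈ Icc a₁ b₁, 0 < f₁ t 0 0) ∨ ∀ t ∈ Icc a₂ b₂, 0 < f₂ t 0 0)
    (hu : ContinuousOn u (Icc 0 1)) (hv : ContinuousOn v (Icc 0 1))
    (huv : isSolution k₁ k₂ f₁ f₂ u v) :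
    nontrivialSolution k₁ k₂ f₁ f₂ a₁ b₁ c₁ a₂ b₂ c₂ u v := by
  have hh₁ := continuousOn_superposition hf₁ hu hv
  have hh₂ := continuousOn_superposition hf₂ hu hv
  refine ⟨⟨hu, hv, hK₁.mul_supNorm_le_infOn hh₁ (fun s hs => hf₁nn s hs _ _) huv.1,
    hK₂.mul_supNorm_le_infOn hh₂ (fun s hs => hf₂nn s hs _ _) huv.2⟩, huv, ?_⟩
  by_contra! hle
  have eq_zero {w : ℝ → ℝ} (hw : ContinuousOn w (Icc 0 1)) (hw0 : supNorm w ≤ 0) {t : ℝ}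
      (ht : t ∈ Icc (0 : ℝ) 1) : w t = 0 :=
    abs_nonpos_iff.1 ((abs_le_supNorm hw ht).trans hw0)
  have hu0 {t : ℝ} := eq_zero hu ((le_max_left _ _).trans hle) (t := t)
  have hv0 {t : ℝ} := eq_zero hv ((le_max_right _ _).trans hle) (t := t)
  rcases hpos with hpos | hpos
  · have ha := left_mem_Icc.2 hK₁.left_le_right
    refine (hK₁.pos_of_forall_pos hh₁ (fun s hs => hf₁nn s hs _ _) huv.1 (fun s hs => ?_) ha).ne'
      (hu0 (hK₁.Icc_subset ha))
    rw [hu0 (hK₁.Icc_subset hs), hv0 (hK₁.Icc_subset hs)]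
    exact hpos s hs
  · have ha := left_mem_Icc.2 hK₂.left_le_right
    refine (hK₂.pos_of_forall_pos hh₂ (fun s hs => hf₂nn s hs _ _) huv.2 (fun s hs => ?_) ha).ne'
      (hv0 (hK₂.Icc_subset ha))
    rw [hu0 (hK₂.Icc_subset hs), hv0 (hK₂.Icc_subset hs)]
    exact hpos s hs

theorem existence_S1_star_general
    (hK₁ : IsConeKernel k₁ Φ₁ a₁ b₁ c₁) (hK₂ : IsConeKernel k₂ Φ₂ a₂ b₂ c₂)
    (hf₁ : ContinuousOn (fun p : ℝ × ℝ × ℝ => f₁ p.1 p.2.1 p.2.2)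
      (Icc 0 1 ×ˢ (univ : Set (ℝ × ℝ))))
    (hf₂ : ContinuousOn (fun p : ℝ × ℝ × ℝ => f₂ p.1 p.2.1 p.2.2)
      (Icc 0 1 ×ˢ (univ : Set (ℝ × ℝ))))
    (hf₁nn : ∀ t ∈ Icc (0 : ℝ) 1, ∀ x y, 0 ≤ f₁ t x y)
    (hf₂nn : ∀ t ∈ Icc (0 : ℝ) 1, ∀ x y, 0 ≤ f₂ t x y)
    (hm₁pos : 0 < m₁) (hm₂pos : 0 < m₂)
    (hm₁ : 1 / m₁ = ⨆ t : Icc (0 : ℝ) 1, ∫ s in (0 : ℝ)..1, |k₁ t s|)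
    (hm₂ : 1 / m₂ = ⨆ t : Icc (0 : ℝ) 1, ∫ s in (0 : ℝ)..1, |k₂ t s|)
    (hr₁ : 0 ≤ r₁) (hr₂ : 0 ≤ r₂) (hI1 : condI1 f₁ f₂ m₁ m₂ r₁ r₂)
    (hpos : (∀ t ∈ Icc a₁ b₁, 0 < f₁ t 0 0) ∨ ∀ t ∈ Icc a₂ b₂, 0 < f₂ t 0 0) :
    ∃ u v : ℝ → ℝ, nontrivialSolution k₁ k₂ f₁ f₂ a₁ b₁ c₁ a₂ b₂ c₂ u v := by
  obtain ⟨u, v, hu, hv, huv⟩ := exists_isSolution_of_condI1 hK₁.continuousOn hK₂.continuousOn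
    hf₁ hf₂ hf₁nn hf₂nn hm₁pos hm₂pos hm₁ hm₂ hr₁ hr₂ hI1
  exact ⟨u, v, nontrivialSolution_of_isSolution hK₁ hK₂ hf₁ hf₂ hf₁nn hf₂nn hpos
    hu.continuousOn hv.continuousOn huv⟩

theorem condI0star.pos_at_origin (h : condI0star f₁ f₂ a₁ b₁ c₁ a₂ b₂ c₂ M₁ M₂ ρ₁ ρ₂)
    (hc₁ : 0 ≤ c₁) (hc₂ : 0 ≤ c₂) (hM₁ : 0 ≤ M₁) (hM₂ : 0 ≤ M₂) (hρ₁ : 0 ≤ ρ₁) (hρ₂ : 0 ≤ ρ₂) :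
    (∀ t ∈ Icc a₁ b₁, 0 < f₁ t 0 0) ∨ ∀ t ∈ Icc a₂ b₂, 0 < f₂ t 0 0 := by
  have h₁ : 0 ≤ ρ₁ / c₁ := div_nonneg hρ₁ hc₁
  have h₂ : 0 ≤ ρ₂ / c₂ := div_nonneg hρ₂ hc₂
  refine h.imp (fun h t ht => ?_) fun h t ht => ?_
  · exact (mul_nonneg hM₁ hρ₁).trans_lt (h t ht 0 (left_mem_Icc.2 h₁) 0 ⟨neg_nonpos.2 h₂, h₂⟩)
  · exact (mul_nonneg hM₂ hρ₂).trans_lt (h t ht 0 ⟨neg_nonpos.2 h₁, h₁⟩ 0 (left_mem_Icc.2 h₂))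

end Existence

theorem existence_S1_star
    (k₁ k₂ : ℝ → ℝ → ℝ) (f₁ f₂ : ℝ → ℝ → ℝ → ℝ) (Φ₁ Φ₂ : ℝ → ℝ)
    (a₁ b₁ c₁ a₂ b₂ c₂ : ℝ)
    (hk₁ : ContinuousOn (fun p : ℝ × ℝ => k₁ p.1 p.2) (Set.Icc 0 1 ×ˢ Set.Icc 0 1))
    (hk₂ : ContinuousOn (fun p : ℝ × ℝ => k₂ p.1 p.2) (Set.Icc 0 1 ×ˢ Set.Icc 0 1))
    (ha₁ : 0 ≤ a₁) (hab₁ : a₁ ≤ b₁) (hb₁ : b₁ ≤ 1)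
    (ha₂ : 0 ≤ a₂) (hab₂ : a₂ ≤ b₂) (hb₂ : b₂ ≤ 1)
    (hc₁ : c₁ ∈ Set.Ioc (0:ℝ) 1) (hc₂ : c₂ ∈ Set.Ioc (0:ℝ) 1)
    (hΦ₁meas : Measurable Φ₁) (hΦ₂meas : Measurable Φ₂)
    (hΦ₁nn : ∀ s ∈ Set.Icc (0:ℝ) 1, 0 ≤ Φ₁ s) (hΦ₂nn : ∀ s ∈ Set.Icc (0:ℝ) 1, 0 ≤ Φ₂ s)
    (hΦ₁bdd : ∃ C : ℝ, ∀ᵐ s ∂(volume.restrict (Set.Icc (0:ℝ) 1)), |Φ₁ s| ≤ C)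
    (hΦ₂bdd : ∃ C : ℝ, ∀ᵐ s ∂(volume.restrict (Set.Icc (0:ℝ) 1)), |Φ₂ s| ≤ C)
    (hΦ₁pos : 0 < ∫ s in a₁..b₁, Φ₁ s) (hΦ₂pos : 0 < ∫ s in a₂..b₂, Φ₂ s)
    (hub₁ : ∀ t ∈ Set.Icc (0:ℝ) 1, ∀ᵐ s ∂(volume.restrict (Set.Icc (0:ℝ) 1)), |k₁ t s| ≤ Φ₁ s)
    (hub₂ : ∀ t ∈ Set.Icc (0:ℝ) 1, ∀ᵐ s ∂(volume.restrict (Set.Icc (0:ℝ) 1)), |k₂ t s| ≤ Φ₂ s)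
    (hlb₁ : ∀ t ∈ Set.Icc a₁ b₁, ∀ᵐ s ∂(volume.restrict (Set.Icc (0:ℝ) 1)), c₁ * Φ₁ s ≤ k₁ t s)
    (hlb₂ : ∀ t ∈ Set.Icc a₂ b₂, ∀ᵐ s ∂(volume.restrict (Set.Icc (0:ℝ) 1)), c₂ * Φ₂ s ≤ k₂ t s)
    (hf₁ : ContinuousOn (fun p : ℝ × ℝ × ℝ => f₁ p.1 p.2.1 p.2.2)
      (Set.Icc 0 1 ×ˢ (Set.univ : Set (ℝ × ℝ))))
    (hf₂ : ContinuousOn (fun p : ℝ × ℝ × ℝ => f₂ p.1 p.2.1 p.2.2)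
      (Set.Icc 0 1 ×ˢ (Set.univ : Set (ℝ × ℝ))))
    (hf₁nn : ∀ t ∈ Set.Icc (0:ℝ) 1, ∀ x y : ℝ, 0 ≤ f₁ t x y)
    (hf₂nn : ∀ t ∈ Set.Icc (0:ℝ) 1, ∀ x y : ℝ, 0 ≤ f₂ t x y)
    (m₁ m₂ M₁ M₂ : ℝ)
    (hm₁pos : 0 < m₁) (hm₂pos : 0 < m₂)
    (hm₁ : 1 / m₁ = ⨆ t : Set.Icc (0:ℝ) 1, ∫ s in (0:ℝ)..1, |k₁ t.1 s|)
    (hm₂ : 1 / m₂ = ⨆ t : Set.Icc (0:ℝ) 1, ∫ s in (0:ℝ)..1, |k₂ t.1 s|)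
    (hM₁pos : 0 < M₁) (hM₂pos : 0 < M₂)
    (hinf₁pos : 0 < ⨅ t : Set.Icc a₁ b₁, ∫ s in a₁..b₁, k₁ t.1 s)
    (hinf₂pos : 0 < ⨅ t : Set.Icc a₂ b₂, ∫ s in a₂..b₂, k₂ t.1 s)
    (hM₁ : 1 / M₁ = ⨅ t : Set.Icc a₁ b₁, ∫ s in a₁..b₁, k₁ t.1 s)
    (hM₂ : 1 / M₂ = ⨅ t : Set.Icc a₂ b₂, ∫ s in a₂..b₂, k₂ t.1 s)
    (ρ₁ ρ₂ r₁ r₂ : ℝ) (hρ₁ : 0 < ρ₁) (hρ₂ : 0 < ρ₂) (hr₁pos : 0 < r₁) (hr₂pos : 0 < r₂)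
    (hr₁ : ρ₁ / c₁ < r₁) (hr₂ : ρ₂ / c₂ < r₂)
    (hI0 : condI0star f₁ f₂ a₁ b₁ c₁ a₂ b₂ c₂ M₁ M₂ ρ₁ ρ₂)
    (hI1 : condI1 f₁ f₂ m₁ m₂ r₁ r₂)
    :
    ∃ u v : ℝ → ℝ, nontrivialSolution k₁ k₂ f₁ f₂ a₁ b₁ c₁ a₂ b₂ c₂ u v := by
  have hΦ₁int : IntegrableOn Φ₁ (Icc 0 1) :=
    hΦ₁bdd.elim (Integrable.of_bound hΦ₁meas.aestronglyMeasurable)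
  have hΦ₂int : IntegrableOn Φ₂ (Icc 0 1) :=
    hΦ₂bdd.elim (Integrable.of_bound hΦ₂meas.aestronglyMeasurable)
  exact existence_S1_star_general
    ⟨hk₁, ha₁, hab₁, hb₁, hc₁.1, hΦ₁int, hΦ₁pos, hub₁, hlb₁⟩
    ⟨hk₂, ha₂, hab₂, hb₂, hc₂.1, hΦ₂int, hΦ₂pos, hub₂, hlb₂⟩
    hf₁ hf₂ hf₁nn hf₂nn hm₁pos hm₂pos hm₁ hm₂ hr₁pos.le hr₂pos.le hI1
    (hI0.pos_at_origin hc₁.1.le hc₂.1.le hM₁pos.le hM₂pos.le hρ₁.le hρ₂.le)
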